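/- Let P be the R-measure and c = (1/2, √3/6). The set { S₁(c), S₂(c), S₃(S₃(c)), (S₃(S₁(c)) + S₃(S₂(c)))/2 } = { (1/6, √3/18), (5/6, √3/18), (1/2, 25√3/54), (1/2, 19√3/54) } is an optimal set of four-means for P, with quantization error V₄(P) = (1/27)·(2·V₁(P) + V₂(P)) = 23/1458. -/

import Mathlib

open MeasureTheory ENNReal

noncomputable section

abbrev E2 : Type := EuclideanSpace ℝ (Fin 2)

/-- The point (a, b) of the Euclidean plane. -/
def pt (a b : ℝ) : E2 := (WithLp.equiv 2 (Fin 2 → ℝ)).symm ![a, b]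

/-- S₁(x) = x/3. -/
def S1 : E2 → E2 := fun x => (3 : ℝ)⁻¹ • x

/-- S₂(x) = x/3 + (2/3, 0). -/
def S2 : E2 → E2 := fun x => (3 : ℝ)⁻¹ • x + pt (2/3) 0

/-- S₃(x) = x/3 + (1/3, √3/3). -/
def S3 : E2 → E2 := fun x => (3 : ℝ)⁻¹ • x + pt (1/3) (Real.sqrt 3 / 3)

def Smap : Fin 3 → E2 → E2 := ![S1, S2, S3]

/-- For a word ω = ω₁⋯ω_k ∈ {1,2,3}^k, the composition S_ω = S_{ω₁} ∘ ⋯ ∘ S_{ω_k}. -/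
def Sword {k : ℕ} (ω : Fin k → Fin 3) : E2 → E2 :=
  fun x => (List.ofFn fun i => Smap (ω i)).foldr (fun g y => g y) x

/-- The closed triangle with vertices (0,0), (1,0), (1/2, √3/2). -/
def Tri : Set E2 := convexHull ℝ {pt 0 0, pt 1 0, pt (1/2) (Real.sqrt 3 / 2)}

/-- The distortion error ∫ min_{a ∈ α} ‖x − a‖² dμ of a set α of points. -/
def err (μ : Measure E2) (α : Set E2) : ℝ≥0∞ :=
  ∫⁻ x, ⨅ a ∈ α, ENNReal.ofReal (‖x - a‖ ^ 2) ∂μ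

/-- The n-th quantization error V_n(μ). -/
def quantErr (μ : Measure E2) (n : ℕ) : ℝ≥0∞ :=
  ⨅ (α : Set E2) (_ : α.Finite ∧ α.ncard ≤ n), err μ α

/-- α is an optimal set of n-means for μ. -/
def IsOptimal (μ : Measure E2) (n : ℕ) (α : Set E2) : Prop :=
  α.Finite ∧ α.ncard ≤ n ∧ err μ α = quantErr μ n

/-! ### Combinatorial part: nine lattice points -/

abbrev Idx : Type := Fin 3 × Fin 3

/-- Vertices of the reference triangle (side 6) in the coordinates `(x, y/√3)`. -/
def vX : Fin 3 → ℕ := ![0, 6, 3]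
def vZ : Fin 3 → ℕ := ![0, 0, 3]

/-- The nine vertices of the first level cells of the reference triangle. -/
def wX (w : Idx) : ℕ := (2 * vX w.1 + vX w.2) / 3
def wZ (w : Idx) : ℕ := (2 * vZ w.1 + vZ w.2) / 3

def idxList : List Idx :=
  [(0,0),(0,1),(0,2),(1,0),(1,1),(1,2),(2,0),(2,1),(2,2)]

def leafOk (B K n1 x1 z1 n2 x2 z2 : ℕ) : Bool :=
  (!(n1 == 0) || (x1 == 0 && z1 == 0)) && (!(n2 == 0) || (x2 == 0 && z2 == 0)) &&
  Nat.ble (B * (max 1 n1) * (max 1 n2) + (max 1 n2) * (x1 * x1 + 3 * (z1 * z1))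
    + (max 1 n1) * (x2 * x2 + 3 * (z2 * z2))) (K * (max 1 n1) * (max 1 n2))

/-- Exhaustive search over all assignments of the listed lattice points to at most two free
centres, or to an external centre with squared distance at least `κ`. -/
def chk (n : ℕ) (κ : Idx → ℕ) (B : ℕ) : List Idx → ℕ → ℕ → ℕ → ℕ → ℕ → ℕ → ℕ → Bool
  | [], K, n1, x1, z1, n2, x2, z2 => leafOk B K n1 x1 z1 n2 x2 z2
  | w :: l, K, n1, x1, z1, n2, x2, z2 =>
    chk n κ B l (K + κ w) n1 x1 z1 n2 x2 z2 &&
    ((n == 0) ||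
      chk n κ B l (K + (wX w * wX w + 3 * (wZ w * wZ w))) (n1+1) (x1 + wX w) (z1 + wZ w) n2 x2 z2) &&
    (Nat.ble n 1 ||
      chk n κ B l (K + (wX w * wX w + 3 * (wZ w * wZ w))) n1 x1 z1 (n2+1) (x2 + wX w) (z2 + wZ w))

/-- Squared norm in the coordinates `(x, y/√3)`. -/
def NN (x z : ℝ) : ℝ := x ^ 2 + 3 * z ^ 2

lemma half_leaf (n x z : ℕ) (h : n = 0 → x = 0 ∧ z = 0) (a b : ℝ) :
    -((x:ℝ) * x + 3 * (z * z)) ≤ (max 1 n : ℕ) * (n * NN a b - 2 * (a * x + 3 * b * z)) := by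
  rcases Nat.eq_zero_or_pos n with h0 | h0
  · obtain ⟨rfl, rfl⟩ := h h0
    subst h0
    simp
  · rw [max_eq_right h0]
    unfold NN
    nlinarith [sq_nonneg ((n:ℝ) * a - x), sq_nonneg ((n:ℝ) * b - z)]

lemma leaf_sound {B K n1 x1 z1 n2 x2 z2 : ℕ} (h : leafOk B K n1 x1 z1 n2 x2 z2 = true)
    (a1 a2 b1 b2 : ℝ) :
    (B:ℝ) ≤ K + (n1 * NN a1 a2 - 2 * (a1 * x1 + 3 * a2 * z1))
      + (n2 * NN b1 b2 - 2 * (b1 * x2 + 3 * b2 * z2)) := by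
  simp only [leafOk, Bool.and_eq_true, Bool.or_eq_true, Bool.not_eq_true', beq_eq_false_iff_ne,
    beq_iff_eq, Nat.ble_eq] at h
  obtain ⟨⟨h1, h2⟩, h3⟩ := h
  have e1 := half_leaf n1 x1 z1 (fun h => h1.resolve_left (fun h' => h' h)) a1 a2
  have e2 := half_leaf n2 x2 z2 (fun h => h2.resolve_left (fun h' => h' h)) b1 b2
  have p1 : (0:ℝ) < (max 1 n1 : ℕ) := by
    have : 0 < max 1 n1 := by omega
    exact_mod_cast this
  have p2 : (0:ℝ) < (max 1 n2 : ℕ) := by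
    have : 0 < max 1 n2 := by omega
    exact_mod_cast this
  have h3' : (B:ℝ) * (max 1 n1 : ℕ) * (max 1 n2 : ℕ)
      + (max 1 n2 : ℕ) * ((x1:ℝ) * x1 + 3 * (z1 * z1))
      + (max 1 n1 : ℕ) * ((x2:ℝ) * x2 + 3 * (z2 * z2)) ≤ (K:ℝ) * (max 1 n1 : ℕ) * (max 1 n2 : ℕ) := by
    exact_mod_cast h3
  generalize ((max 1 n1 : ℕ) : ℝ) = m1 at *
  generalize ((max 1 n2 : ℕ) : ℝ) = m2 at *
  generalize (n1 * NN a1 a2 - 2 * (a1 * x1 + 3 * a2 * z1)) = u1 at *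
  generalize (n2 * NN b1 b2 - 2 * (b1 * x2 + 3 * b2 * z2)) = u2 at *
  have e1' := mul_le_mul_of_nonneg_left e1 p2.le
  have e2' := mul_le_mul_of_nonneg_left e2 p1.le
  have : (B:ℝ) * (m1 * m2) ≤ (K + u1 + u2) * (m1 * m2) := by nlinarith
  exact le_of_mul_le_mul_right this (mul_pos p1 p2)

lemma chk_sound (n : ℕ) (κ : Idx → ℕ) (B : ℕ) (f : Idx → ℝ) (a1 a2 b1 b2 : ℝ)
    (hf : ∀ w, (κ w : ℝ) ≤ f w ∨ (n ≠ 0 ∧ NN (wX w - a1) (wZ w - a2) ≤ f w) ∨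
      (1 < n ∧ NN (wX w - b1) (wZ w - b2) ≤ f w)) (l : List Idx) :
    ∀ K n1 x1 z1 n2 x2 z2 : ℕ, chk n κ B l K n1 x1 z1 n2 x2 z2 = true →
    (B:ℝ) ≤ K + (n1 * NN a1 a2 - 2 * (a1 * x1 + 3 * a2 * z1))
      + (n2 * NN b1 b2 - 2 * (b1 * x2 + 3 * b2 * z2)) + (l.map f).sum := by
  induction l with
  | nil =>
    intro K n1 x1 z1 n2 x2 z2 h
    have := leaf_sound (by simpa only [chk] using h) a1 a2 b1 b2
    simpa using this
  | cons w l ih =>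
    intro K n1 x1 z1 n2 x2 z2 h
    simp only [chk, Bool.and_eq_true, Bool.or_eq_true, beq_iff_eq, Nat.ble_eq] at h
    obtain ⟨⟨h1, h2⟩, h3⟩ := h
    rw [List.map_cons, List.sum_cons]
    rcases hf w with hw | ⟨hn, hw⟩ | ⟨hn, hw⟩
    · have := ih _ _ _ _ _ _ _ h1
      push_cast at this
      linarith
    · have := ih _ _ _ _ _ _ _ (h2.resolve_left hn)
      push_cast at this
      unfold NN at *
      nlinarith
    · have := ih _ _ _ _ _ _ _ (h3.resolve_left (by omega))
      push_cast at this
      unfold NN at *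
      nlinarith

/-- Lower bounds for the squared distance of the nine points to points not owned by the
`i`-th triangle; `fl j` says that points between triangles `i` and `j` are present. -/
def kap (i : Fin 3) (fl : Fin 3 → Bool) (w : Idx) : ℕ :=
  if w.1 = w.2 then (if w.1 ≠ i ∧ fl w.1 = true then 3 else 18)
  else (if w.1 ≠ i ∧ w.2 ≠ i ∧ fl w.1 = true then 8 else 10)

def flc (i : Fin 3) (fl : Fin 3 → Bool) : ℕ :=
  (Finset.univ.filter fun j => j ≠ i ∧ fl j = true).card

def Hval (o k : ℕ) : ℕ :=
  match o, k with
  | 0, 0 => 114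
  | 0, 1 => 97
  | 0, _ => 80
  | 1, 0 => 60
  | 1, 1 => 48
  | 1, _ => 40
  | 2, 0 => 36
  | _, _ => 0

lemma chk0 : ∀ i : Fin 3, ∀ fl : Fin 3 → Bool,
    chk 0 (kap i fl) (Hval 0 (flc i fl)) idxList 0 0 0 0 0 0 0 = true := by
  decide +kernel

lemma chk1 : ∀ i : Fin 3, ∀ fl : Fin 3 → Bool,
    chk 1 (kap i fl) (Hval 1 (flc i fl)) idxList 0 0 0 0 0 0 0 = true := by
  decide +kernel

def kap0 (w : Idx) : ℕ := if w.1 = w.2 then 18 else 10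

lemma chk2 : chk 2 kap0 36 idxList 0 0 0 0 0 0 0 = true := by
  decide +kernel

/-! ### The three triangles and the position of the centres -/

/-- Offsets of the three triangles, in units `1/18`. -/
def oX : Fin 3 → ℕ := ![0, 12, 6]
def oZ : Fin 3 → ℕ := ![0, 0, 6]

def dd (i : Fin 3) (w : Idx) (a : ℝ × ℝ) : ℝ := NN (wX w + oX i - a.1) (wZ w + oZ i - a.2)

def near (i : Fin 3) (a : ℝ × ℝ) : Prop := ∃ k : Fin 3, dd i (k, k) a < 18

def dint (i : Fin 3) (w : Idx) (j : Fin 3) (v : Idx) : ℤ :=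
  ((wX w + oX i : ℤ) - (wX v + oX j)) ^ 2 + 3 * ((wZ w + oZ i : ℤ) - (wZ v + oZ j)) ^ 2

lemma dint_cast (i : Fin 3) (w : Idx) (j : Fin 3) (v : Idx) (a : ℝ × ℝ) :
    (dint i w j v : ℝ) = NN ((wX w + oX i - a.1) - (wX v + oX j - a.1))
      ((wZ w + oZ i - a.2) - (wZ v + oZ j - a.2)) := by
  unfold dint NN
  push_cast
  ring

def okD (k : ℕ) (D : ℤ) : Prop :=
  (k = 18 ∧ 72 ≤ D) ∨ (k = 10 ∧ 55 ≤ D) ∨ (k = 8 ∧ 50 ≤ D) ∨ (k = 3 ∧ 36 ≤ D)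

instance (k : ℕ) (D : ℤ) : Decidable (okD k D) := by unfold okD; infer_instance

lemma okD_sound {k : ℕ} {i j : Fin 3} {w v : Idx} (h : okD k (dint i w j v)) {a : ℝ × ℝ}
    (hv : dd j v a < 18) : (k : ℝ) ≤ dd i w a := by
  unfold dd at *
  have e := dint_cast i w j v a
  generalize ((wX w : ℝ) + oX i - a.1) = p1 at *
  generalize ((wZ w : ℝ) + oZ i - a.2) = p2 at *
  generalize ((wX v : ℝ) + oX j - a.1) = q1 at *
  generalize ((wZ v : ℝ) + oZ j - a.2) = q2 at *
  unfold NN at *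
  rcases h with ⟨rfl, h⟩ | ⟨rfl, h⟩ | ⟨rfl, h⟩ | ⟨rfl, h⟩
  · have h' : (72 : ℝ) ≤ dint i w j v := by exact_mod_cast h
    push_cast
    nlinarith [sq_nonneg (p1 + q1), sq_nonneg (p2 + q2)]
  · have h' : (55 : ℝ) ≤ dint i w j v := by exact_mod_cast h
    push_cast
    nlinarith [sq_nonneg (4 / 3 * p1 + q1), sq_nonneg (4 / 3 * p2 + q2)]
  · have h' : (50 : ℝ) ≤ dint i w j v := by exact_mod_cast h
    push_cast
    nlinarith [sq_nonneg (3 / 2 * p1 + q1), sq_nonneg (3 / 2 * p2 + q2)]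
  · have h' : (36 : ℝ) ≤ dint i w j v := by exact_mod_cast h
    push_cast
    nlinarith [sq_nonneg (5 / 2 * p1 + q1), sq_nonneg (5 / 2 * p2 + q2)]

lemma facing_dec : ∀ i j k l : Fin 3, i ≠ j → ¬ (k = j ∧ l = i) →
    okD 18 (dint i (k, k) j (l, l)) := by decide +kernel

lemma facing {i j k l : Fin 3} (hij : i ≠ j) {a : ℝ × ℝ} (h1 : dd i (k, k) a < 18)
    (h2 : dd j (l, l) a < 18) : k = j ∧ l = i := by
  by_contra hc
  have := okD_sound (facing_dec i j k l hij hc) h2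
  push_cast at this
  linarith

lemma not_three {a : ℝ × ℝ} (h0 : near 0 a) (h1 : near 1 a) (h2 : near 2 a) : False := by
  obtain ⟨k0, h0⟩ := h0
  obtain ⟨k1, h1⟩ := h1
  obtain ⟨k2, h2⟩ := h2
  have e1 := facing (by decide) h0 h1
  have e2 := facing (by decide) h0 h2
  have := e1.1.symm.trans e2.1
  exact absurd this (by decide)

lemma far_bound {i : Fin 3} {a : ℝ × ℝ} (h : ¬ near i a) (w : Idx) : (kap0 w : ℝ) ≤ dd i w a := by
  unfold near at h
  push Not at h
  have h0 := h 0
  have h1 := h 1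
  have h2 := h 2
  obtain ⟨p, q⟩ := w
  unfold dd at *
  generalize (oX i : ℝ) = s at *
  generalize (oZ i : ℝ) = t at *
  fin_cases p <;> fin_cases q <;> simp [kap0, NN, wX, wZ, vX, vZ] at * <;> nlinarith

/-- The possible sets of triangles near to a point. -/
def nb : Fin 7 → Fin 3 → Bool :=
  ![![false, false, false], ![true, false, false], ![false, true, false], ![false, false, true],
    ![true, true, false], ![true, false, true], ![false, true, true]]

def own (c : Fin 4 → Fin 7) (i : Fin 3) (t : Fin 4) : Prop :=
  nb (c t) i = true ∧ ∀ j, j ≠ i → nb (c t) j = false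

instance (c : Fin 4 → Fin 7) (i : Fin 3) (t : Fin 4) : Decidable (own c i t) := by
  unfold own; infer_instance

def oc (c : Fin 4 → Fin 7) (i : Fin 3) : ℕ := (Finset.univ.filter fun t => own c i t).card

def fl (c : Fin 4 → Fin 7) (i j : Fin 3) : Bool :=
  decide (∃ t, nb (c t) i = true ∧ nb (c t) j = true)

lemma final_dec : ∀ c0 c1 c2 c3 : Fin 7,
    156 ≤ Hval (oc ![c0, c1, c2, c3] 0) (flc 0 (fl ![c0, c1, c2, c3] 0))
      + Hval (oc ![c0, c1, c2, c3] 1) (flc 1 (fl ![c0, c1, c2, c3] 1))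
      + Hval (oc ![c0, c1, c2, c3] 2) (flc 2 (fl ![c0, c1, c2, c3] 2)) := by
  decide +kernel

lemma exists_code (a : ℝ × ℝ) : ∃ c : Fin 7, ∀ j, nb c j = true ↔ near j a := by
  by_cases h0 : near 0 a <;> by_cases h1 : near 1 a <;> by_cases h2 : near 2 a
  · exact (not_three h0 h1 h2).elim
  · exact ⟨4, fun j => by fin_cases j <;> simp [nb, h0, h1, h2]⟩
  · exact ⟨5, fun j => by fin_cases j <;> simp [nb, h0, h1, h2]⟩
  · exact ⟨1, fun j => by fin_cases j <;> simp [nb, h0, h1, h2]⟩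
  · exact ⟨6, fun j => by fin_cases j <;> simp [nb, h0, h1, h2]⟩
  · exact ⟨2, fun j => by fin_cases j <;> simp [nb, h0, h1, h2]⟩
  · exact ⟨3, fun j => by fin_cases j <;> simp [nb, h0, h1, h2]⟩
  · exact ⟨0, fun j => by fin_cases j <;> simp [nb, h0, h1, h2]⟩

lemma kap_le : ∀ (i : Fin 3) (f : Fin 3 → Bool) (w : Idx), kap i f w ≤ kap0 w := by decide +kernel

lemma kap_eq : ∀ (i : Fin 3) (f : Fin 3 → Bool) (w : Idx), flc i f = 0 → kap i f w = kap0 w := by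
  decide +kernel

lemma lens_dec : ∀ (i j : Fin 3) (f : Fin 3 → Bool) (w : Idx), i ≠ j → f j = true →
    okD (kap i f w) (dint i w j (i, i)) := by decide +kernel

lemma not_own_bound {i : Fin 3} {a : Fin 4 → ℝ × ℝ} {c : Fin 4 → Fin 7}
    (hc : ∀ t j, nb (c t) j = true ↔ near j (a t)) {t : Fin 4} (ht : ¬ own c i t) (w : Idx) :
    (kap i (fl c i) w : ℝ) ≤ dd i w (a t) := by
  by_cases hn : near i (a t)
  · have hi : nb (c t) i = true := (hc t i).2 hn
    unfold own at ht
    push Not at ht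
    obtain ⟨j, hji, hj⟩ := ht hi
    have hj' : nb (c t) j = true := by simpa using hj
    obtain ⟨k, hk⟩ := hn
    obtain ⟨l, hl⟩ := (hc t j).1 hj'
    obtain ⟨-, rfl⟩ := facing hji.symm hk hl
    exact okD_sound (lens_dec _ j _ w hji.symm (by simpa [fl] using ⟨t, hi, hj'⟩)) hl
  · refine le_trans ?_ (far_bound hn w)
    exact_mod_cast kap_le i _ w

lemma tri_bound (i : Fin 3) {a : Fin 4 → ℝ × ℝ} {c : Fin 4 → Fin 7}
    (hc : ∀ t j, nb (c t) j = true ↔ near j (a t)) (f : Idx → ℝ)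
    (hf : ∀ w, ∃ t, f w = dd i w (a t)) :
    (Hval (oc c i) (flc i (fl c i)) : ℝ) ≤ (idxList.map f).sum := by
  have hshift : ∀ w t, dd i w (a t) = NN (wX w - ((a t).1 - oX i)) (wZ w - ((a t).2 - oZ i)) := by
    intro w t
    unfold dd NN
    ring
  have key : ∀ w t, f w = dd i w (a t) → ¬ own c i t → (kap i (fl c i) w : ℝ) ≤ f w := by
    intro w t h1 h2
    rw [h1]
    exact not_own_bound hc h2 w
  have hpos : (0:ℝ) ≤ (idxList.map f).sum := by
    apply List.sum_nonneg
    intro x hx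
    obtain ⟨w, -, rfl⟩ := List.mem_map.1 hx
    obtain ⟨t, ht⟩ := hf w
    rw [ht]
    unfold dd NN
    positivity
  rcases h : oc c i with _ | _ | _ | n
  · have h' : ∀ t, ¬ own c i t := by
      intro t ht
      have : t ∈ Finset.univ.filter fun t => own c i t := by simpa using ht
      rw [Finset.card_eq_zero.1 h] at this
      simp at this
    have := chk_sound 0 (kap i (fl c i)) _ f 0 0 0 0 (fun w => by
      obtain ⟨t, ht⟩ := hf w
      exact Or.inl (key w t ht (h' t))) idxList 0 0 0 0 0 0 0 (chk0 i (fl c i))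
    simpa using this
  · obtain ⟨t0, h0⟩ := Finset.card_eq_one.1 h
    have h' : ∀ t, own c i t → t = t0 := by
      intro t ht
      have : t ∈ Finset.univ.filter fun t => own c i t := by simpa using ht
      rw [h0] at this
      simpa using this
    have := chk_sound 1 (kap i (fl c i)) _ f ((a t0).1 - oX i) ((a t0).2 - oZ i) 0 0 (fun w => by
      obtain ⟨t, ht⟩ := hf w
      by_cases ho : own c i t
      · have := h' t ho
        subst this
        exact Or.inr (Or.inl ⟨by simp, by rw [ht, hshift]⟩)
      · exact Or.inl (key w t ht ho)) idxList 0 0 0 0 0 0 0 (chk1 i (fl c i))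
    simpa using this
  · rcases hk : flc i (fl c i) with _ | k
    · obtain ⟨t0, t1, -, h0⟩ := Finset.card_eq_two.1 h
      have h' : ∀ t, own c i t → t = t0 ∨ t = t1 := by
        intro t ht
        have : t ∈ Finset.univ.filter fun t => own c i t := by simpa using ht
        rw [h0] at this
        simpa using this
      have := chk_sound 2 kap0 36 f ((a t0).1 - oX i) ((a t0).2 - oZ i)
        ((a t1).1 - oX i) ((a t1).2 - oZ i) (fun w => by
        obtain ⟨t, ht⟩ := hf w
        by_cases ho : own c i t
        · rcases h' t ho with h'' | h''
          · subst h''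
            exact Or.inr (Or.inl ⟨by simp, by rw [ht, hshift]⟩)
          · subst h''
            exact Or.inr (Or.inr ⟨by simp, by rw [ht, hshift]⟩)
        · have := key w t ht ho
          rw [kap_eq i _ w hk] at this
          exact Or.inl this) idxList 0 0 0 0 0 0 0 chk2
      simpa [Hval] using this
    · simpa [Hval] using hpos
  · simpa [Hval] using hpos

/-- The discrete four-means bound for the 27 lattice points. -/
lemma four_bound (a : Fin 4 → ℝ × ℝ) (f : Fin 3 → Idx → ℝ)
    (hf : ∀ i w, ∃ t, f i w = dd i w (a t)) :
    (156:ℝ) ≤ (idxList.map (f 0)).sum + (idxList.map (f 1)).sum + (idxList.map (f 2)).sum := by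
  choose c hc using fun t => exists_code (a t)
  have h0 := tri_bound 0 hc (f 0) (hf 0)
  have h1 := tri_bound 1 hc (f 1) (hf 1)
  have h2 := tri_bound 2 hc (f 2) (hf 2)
  have h := final_dec (c 0) (c 1) (c 2) (c 3)
  have e : ![c 0, c 1, c 2, c 3] = c := by
    ext t
    fin_cases t <;> rfl
  rw [e] at h
  have h' : (156:ℝ) ≤ Hval (oc c 0) (flc 0 (fl c 0)) + Hval (oc c 1) (flc 1 (fl c 1))
      + Hval (oc c 2) (flc 2 (fl c 2)) := by exact_mod_cast h
  linarith

lemma two_bound (a b : ℝ × ℝ) (f : Idx → ℝ)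
    (hf : ∀ w, f w = dd 0 w a ∨ f w = dd 0 w b) : (36:ℝ) ≤ (idxList.map f).sum := by
  have := chk_sound 2 kap0 36 f a.1 a.2 b.1 b.2 (fun w => by
    rcases hf w with h | h
    · exact Or.inr (Or.inl ⟨by simp, by rw [h]; simp [dd, oX, oZ]⟩)
    · exact Or.inr (Or.inr ⟨by simp, by rw [h]; simp [dd, oX, oZ]⟩))
    idxList 0 0 0 0 0 0 0 chk2
  simpa using this

/-! ### Barycentric coordinates and the invariant measure -/

def zc (x : E2) : ℝ := x 1 / Real.sqrt 3

def lam : Fin 3 → E2 → ℝ := ![fun x => 1 - x 0 - zc x, fun x => x 0 - zc x, fun x => 2 * zc x]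

def Rf (x : E2) : ℝ := lam 0 x * lam 1 x + lam 0 x * lam 2 x + lam 1 x * lam 2 x

def vert : Fin 3 → E2 := ![pt 0 0, pt 1 0, pt (1/2) (Real.sqrt 3 / 2)]

lemma sqrt3_pos : (0:ℝ) < Real.sqrt 3 := by positivity

@[simp] lemma pt_zero (a b : ℝ) : pt a b 0 = a := by simp [pt]
@[simp] lemma pt_one (a b : ℝ) : pt a b 1 = b := by simp [pt]
@[simp] lemma zc_pt (a b : ℝ) : zc (pt a b) = b / Real.sqrt 3 := by simp [zc]

lemma vert_x (k : Fin 3) : vert k 0 = ![0, 1, 1/2] k := by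
  fin_cases k <;> simp [vert]

lemma vert_z (k : Fin 3) : zc (vert k) = ![0, 0, 1/2] k := by
  have := sqrt3_pos
  fin_cases k <;> simp [vert]
  field_simp

lemma Smap_x (i : Fin 3) (x : E2) : Smap i x 0 = x 0 / 3 + ![0, 2/3, 1/3] i := by
  fin_cases i <;> simp [Smap, S1, S2, S3] <;> ring

lemma Smap_z (i : Fin 3) (x : E2) : zc (Smap i x) = zc x / 3 + ![0, 0, 1/3] i := by
  have := sqrt3_pos
  fin_cases i <;> simp [Smap, S1, S2, S3, zc] <;> field_simp

lemma normsq (x y : E2) : ‖x - y‖ ^ 2 = NN (x 0 - y 0) (zc x - zc y) := by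
  have h3 : Real.sqrt 3 ^ 2 = 3 := Real.sq_sqrt (by norm_num)
  have := sqrt3_pos
  rw [EuclideanSpace.norm_sq_eq]
  simp only [Fin.sum_univ_two, PiLp.sub_apply, Real.norm_eq_abs, sq_abs, NN, zc]
  rw [← sub_div, div_pow, h3]
  ring

lemma ext_coord {x y : E2} (h0 : x 0 = y 0) (h1 : zc x = zc y) : x = y := by
  have := sqrt3_pos
  ext i
  fin_cases i
  · exact h0
  · unfold zc at h1
    field_simp at h1
    exact h1

lemma lam_sum (x : E2) : lam 0 x + lam 1 x + lam 2 x = 1 := by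
  simp [lam]; ring

lemma lam_Smap (k i : Fin 3) (x : E2) :
    lam k (Smap i x) = lam k x / 3 + (if k = i then 2/3 else 0) := by
  fin_cases k <;> fin_cases i <;> simp [lam, Smap_x, Smap_z] <;> ring

lemma Rf_Smap (i : Fin 3) (x : E2) : Rf (Smap i x) = Rf x / 9 + 2 / 9 * (1 - lam i x) := by
  have h := lam_sum x
  unfold Rf
  rw [lam_Smap, lam_Smap, lam_Smap]
  fin_cases i <;> simp <;> linear_combination (2/9 : ℝ) * h

/-- Maps of the form `x ↦ r x + s`. -/
def IsHom (T : E2 → E2) (r : ℝ) : Prop :=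
  ∃ s u : ℝ, ∀ x, T x 0 = r * x 0 + s ∧ zc (T x) = r * zc x + u

lemma hom_id : IsHom (fun x => x) 1 := ⟨0, 0, fun x => by simp⟩

lemma hom1 (i : Fin 3) : IsHom (Smap i) (1/3) :=
  ⟨_, _, fun x => ⟨by rw [Smap_x]; ring, by rw [Smap_z]; ring⟩⟩

lemma hom2 (i j : Fin 3) : IsHom (fun x => Smap i (Smap j x)) (1/9) :=
  ⟨![0, 2/3, 1/3] j / 3 + ![0, 2/3, 1/3] i, ![0, 0, 1/3] j / 3 + ![0, 0, 1/3] i,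
    fun x => ⟨by rw [Smap_x, Smap_x]; ring, by rw [Smap_z, Smap_z]; ring⟩⟩

lemma hom_identity {T : E2 → E2} {r : ℝ} (hT : IsHom T r) (x a : E2) :
    ‖T x - a‖ ^ 2 = lam 0 x * ‖T (vert 0) - a‖ ^ 2 + lam 1 x * ‖T (vert 1) - a‖ ^ 2
      + lam 2 x * ‖T (vert 2) - a‖ ^ 2 - r ^ 2 * Rf x := by
  obtain ⟨s, u, h⟩ := hT
  simp only [normsq, (h _).1, (h _).2, vert_x, vert_z]
  simp [NN, Rf, lam]
  ring

lemma meas_coord (i : Fin 2) : Measurable fun x : E2 => x i := by fun_prop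

lemma meas_zc : Measurable zc := by unfold zc; fun_prop

lemma meas_lam (k : Fin 3) : Measurable (lam k) := by
  have := meas_zc
  fin_cases k <;> simp [lam] <;> fun_prop

lemma meas_Rf : Measurable Rf := by
  have h0 := meas_lam 0
  have h1 := meas_lam 1
  have h2 := meas_lam 2
  unfold Rf
  fun_prop

lemma meas_Smap (i : Fin 3) : Measurable (Smap i) := by
  fin_cases i
  · change Measurable S1
    unfold S1
    fun_prop
  · change Measurable S2
    unfold S2
    fun_prop
  · change Measurable S3
    unfold S3
    fun_prop

section inv

variable {P : Measure E2} [IsProbabilityMeasure P]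

lemma inv_lintegral (hP : P = (3 : ℝ≥0∞)⁻¹ • (P.map S1 + P.map S2 + P.map S3))
    {f : E2 → ℝ≥0∞} (hf : Measurable f) :
    ∫⁻ x, f x ∂P = 3⁻¹ * (∫⁻ x, f (Smap 0 x) ∂P + ∫⁻ x, f (Smap 1 x) ∂P
      + ∫⁻ x, f (Smap 2 x) ∂P) := by
  have e0 : ∫⁻ x, f x ∂(P.map S1) = ∫⁻ x, f (Smap 0 x) ∂P := lintegral_map hf (meas_Smap 0)
  have e1 : ∫⁻ x, f x ∂(P.map S2) = ∫⁻ x, f (Smap 1 x) ∂P := lintegral_map hf (meas_Smap 1)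
  have e2 : ∫⁻ x, f x ∂(P.map S3) = ∫⁻ x, f (Smap 2 x) ∂P := lintegral_map hf (meas_Smap 2)
  conv_lhs => rw [hP]
  rw [lintegral_smul_measure, lintegral_add_measure, lintegral_add_measure, e0, e1, e2]
  rfl

lemma inv_measure (hP : P = (3 : ℝ≥0∞)⁻¹ • (P.map S1 + P.map S2 + P.map S3))
    {s t : Set E2} (hs : MeasurableSet s) (h : ∀ i x, Smap i x ∈ s → x ∈ t) : P s ≤ P t := by
  have h0 : (P.map S1) s ≤ P t := by
    refine (Measure.map_apply (meas_Smap 0) hs).le.trans ?_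
    exact measure_mono fun x hx => h 0 x hx
  have h1 : (P.map S2) s ≤ P t := by
    refine (Measure.map_apply (meas_Smap 1) hs).le.trans ?_
    exact measure_mono fun x hx => h 1 x hx
  have h2 : (P.map S3) s ≤ P t := by
    refine (Measure.map_apply (meas_Smap 2) hs).le.trans ?_
    exact measure_mono fun x hx => h 2 x hx
  calc P s = 3⁻¹ * ((P.map S1) s + (P.map S2) s + (P.map S3) s) := by
        conv_lhs => rw [hP]
        simp [mul_add]
    _ ≤ 3⁻¹ * (P t + P t + P t) := by gcongr
    _ = 3⁻¹ * (3 * P t) := by ring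
    _ = P t := by
        rw [← mul_assoc, ENNReal.inv_mul_cancel (by norm_num) (by norm_num), one_mul]

lemma ae_nonneg_of (hP : P = (3 : ℝ≥0∞)⁻¹ • (P.map S1 + P.map S2 + P.map S3))
    {f : E2 → ℝ} (hf : Measurable f) (h : ∀ i x, f x / 3 ≤ f (Smap i x)) : ∀ᵐ x ∂P, 0 ≤ f x := by
  have hm : ∀ t : ℝ, MeasurableSet {x | f x < -t} := fun t => measurableSet_lt hf measurable_const
  have step : ∀ t : ℝ, P {x | f x < -t} ≤ P {x | f x < -(3 * t)} := by
    intro t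
    apply inv_measure hP (hm t)
    intro i x hx
    have := h i x
    simp only [Set.mem_ofPred_eq] at *
    linarith
  have stepn : ∀ (t : ℝ) (n : ℕ), P {x | f x < -t} ≤ P {x | f x < -(3 ^ n * t)} := by
    intro t n
    induction n with
    | zero => simp
    | succ n ih =>
      refine ih.trans ((step _).trans (le_of_eq ?_))
      congr 2
      ext x
      rw [pow_succ]
      ring_nf
  have hz : ∀ t : ℝ, 0 < t → P {x | f x < -t} = 0 := by
    intro t ht
    have anti : Antitone fun n : ℕ => {x : E2 | f x < -(3 ^ n * t)} := by
      intro m n hmn x hx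
      simp only [Set.mem_ofPred_eq] at *
      have : (3:ℝ) ^ m ≤ 3 ^ n := pow_le_pow_right₀ (by norm_num) hmn
      nlinarith
    have lim := tendsto_measure_iInter_atTop (μ := P)
      (fun n => (hm (3 ^ n * t)).nullMeasurableSet) anti ⟨0, measure_ne_top _ _⟩
    have hemp : (⋂ n : ℕ, {x : E2 | f x < -(3 ^ n * t)}) = ∅ := by
      ext x
      simp only [Set.mem_iInter, Set.mem_ofPred_eq, Set.mem_empty_iff_false, iff_false, not_forall]
      obtain ⟨n, hn⟩ := pow_unbounded_of_one_lt (-f x / t) (by norm_num : (1:ℝ) < 3)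
      refine ⟨n, ?_⟩
      rw [div_lt_iff₀ ht] at hn
      linarith
    rw [hemp, measure_empty] at lim
    have := ge_of_tendsto' lim (fun n => stepn t n)
    exact le_antisymm this (by simp)
  have hall : ∀ᵐ x ∂P, ∀ n : ℕ, -(1 / ((n:ℝ) + 1)) ≤ f x := by
    rw [ae_all_iff]
    intro n
    rw [ae_iff]
    simpa using hz (1 / ((n:ℝ) + 1)) (by positivity)
  filter_upwards [hall] with x hx
  by_contra hneg
  push Not at hneg
  obtain ⟨n, hn⟩ := exists_nat_one_div_lt (neg_pos.2 hneg)
  have := hx n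
  linarith

lemma ae_lam (hP : P = (3 : ℝ≥0∞)⁻¹ • (P.map S1 + P.map S2 + P.map S3)) :
    ∀ᵐ x ∂P, ∀ k, 0 ≤ lam k x := by
  rw [ae_all_iff]
  intro k
  apply ae_nonneg_of hP (meas_lam k)
  intro i x
  rw [lam_Smap]
  split_ifs <;> linarith

lemma lam_le_one {x : E2} (h : ∀ k, 0 ≤ lam k x) (k : Fin 3) : lam k x ≤ 1 := by
  have := lam_sum x
  have h0 := h 0
  have h1 := h 1
  have h2 := h 2
  fin_cases k <;> simp <;> linarith

lemma int_lam (hP : P = (3 : ℝ≥0∞)⁻¹ • (P.map S1 + P.map S2 + P.map S3)) (k : Fin 3) :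
    Integrable (lam k) P := by
  refine Integrable.of_bound (meas_lam k).aestronglyMeasurable 1 ?_
  filter_upwards [ae_lam hP] with x hx
  rw [Real.norm_eq_abs, abs_of_nonneg (hx k)]
  exact lam_le_one hx k

lemma int_Rf (hP : P = (3 : ℝ≥0∞)⁻¹ • (P.map S1 + P.map S2 + P.map S3)) :
    Integrable Rf P := by
  refine Integrable.of_bound meas_Rf.aestronglyMeasurable 3 ?_
  filter_upwards [ae_lam hP] with x hx
  have a0 := hx 0
  have a1 := hx 1
  have a2 := hx 2
  have b0 := lam_le_one hx 0
  have b1 := lam_le_one hx 1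
  have b2 := lam_le_one hx 2
  have c0 := mul_nonneg a0 a1
  have c1 := mul_nonneg a0 a2
  have c2 := mul_nonneg a1 a2
  have d0 := mul_le_one₀ b0 a1 b1
  have d1 := mul_le_one₀ b0 a2 b2
  have d2 := mul_le_one₀ b1 a2 b2
  rw [Real.norm_eq_abs, abs_of_nonneg] <;> unfold Rf <;> linarith

lemma inv_integral (hP : P = (3 : ℝ≥0∞)⁻¹ • (P.map S1 + P.map S2 + P.map S3))
    {f : E2 → ℝ} (hf : Measurable f) (hi : ∀ i, Integrable (fun x => f (Smap i x)) P) :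
    ∫ x, f x ∂P = 1 / 3 * (∫ x, f (Smap 0 x) ∂P + ∫ x, f (Smap 1 x) ∂P
      + ∫ x, f (Smap 2 x) ∂P) := by
  have im : ∀ i, Integrable f (P.map (Smap i)) := fun i =>
    (integrable_map_measure hf.aestronglyMeasurable (meas_Smap i).aemeasurable).2 (hi i)
  have i0 : Integrable f (P.map S1) := im 0
  have i1 : Integrable f (P.map S2) := im 1
  have i2 : Integrable f (P.map S3) := im 2
  have e : ∀ i, ∫ x, f x ∂(P.map (Smap i)) = ∫ x, f (Smap i x) ∂P := fun i =>
    integral_map (meas_Smap i).aemeasurable hf.aestronglyMeasurable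
  have e0 : ∫ x, f x ∂(P.map S1) = ∫ x, f (Smap 0 x) ∂P := e 0
  have e1 : ∫ x, f x ∂(P.map S2) = ∫ x, f (Smap 1 x) ∂P := e 1
  have e2 : ∫ x, f x ∂(P.map S3) = ∫ x, f (Smap 2 x) ∂P := e 2
  conv_lhs => rw [hP]
  rw [integral_smul_measure, integral_add_measure (i0.add_measure i1) i2,
    integral_add_measure i0 i1, e0, e1, e2]
  simp

lemma integral_lam (hP : P = (3 : ℝ≥0∞)⁻¹ • (P.map S1 + P.map S2 + P.map S3)) (k : Fin 3) :
    ∫ x, lam k x ∂P = 1 / 3 := by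
  have hi := int_lam hP k
  have e : ∀ i, ∫ x, lam k (Smap i x) ∂P = (∫ x, lam k x ∂P) / 3 + (if k = i then 2/3 else 0) := by
    intro i
    simp only [lam_Smap]
    rw [integral_add (hi.div_const 3) (integrable_const _), integral_div]
    simp
  have h := inv_integral hP (meas_lam k) (fun i => by
    simp only [lam_Smap]
    exact (hi.div_const 3).add (integrable_const _))
  rw [e, e, e] at h
  fin_cases k <;> simp at h ⊢ <;> linarith

lemma integral_Rf (hP : P = (3 : ℝ≥0∞)⁻¹ • (P.map S1 + P.map S2 + P.map S3)) :
    ∫ x, Rf x ∂P = 1 / 6 := by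
  have hi := int_Rf hP
  have hl : ∀ i, Integrable (fun x => 2 / 9 * (1 - lam i x)) P := fun i =>
    ((integrable_const _).sub (int_lam hP i)).const_mul _
  have e : ∀ i, ∫ x, Rf (Smap i x) ∂P = (∫ x, Rf x ∂P) / 9 + 4 / 27 := by
    intro i
    simp only [Rf_Smap]
    rw [integral_add (hi.div_const 9) (hl i), integral_div, integral_const_mul,
      integral_sub (integrable_const _) (int_lam hP i), integral_lam hP]
    simp
    norm_num
  have h := inv_integral hP meas_Rf (fun i => by
    simp only [Rf_Smap]
    exact (hi.div_const 9).add (hl i))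
  rw [e, e, e] at h
  linarith

lemma integral_comb (hP : P = (3 : ℝ≥0∞)⁻¹ • (P.map S1 + P.map S2 + P.map S3))
    (m : Fin 3 → ℝ) (q : ℝ) :
    Integrable (fun x => lam 0 x * m 0 + lam 1 x * m 1 + lam 2 x * m 2 - q * Rf x) P ∧
    ∫ x, (lam 0 x * m 0 + lam 1 x * m 1 + lam 2 x * m 2 - q * Rf x) ∂P
      = (m 0 + m 1 + m 2) / 3 - q / 6 := by
  have i0 := (int_lam hP 0).mul_const (m 0)
  have i1 := (int_lam hP 1).mul_const (m 1)
  have i2 := (int_lam hP 2).mul_const (m 2)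
  have i3 := (int_Rf hP).const_mul q
  refine ⟨((i0.add i1).add i2).sub i3, ?_⟩
  have i01 : Integrable (fun x => lam 0 x * m 0 + lam 1 x * m 1) P := i0.add i1
  have i012 : Integrable (fun x => lam 0 x * m 0 + lam 1 x * m 1 + lam 2 x * m 2) P := i01.add i2
  rw [integral_sub i012 i3, integral_add i01 i2, integral_add i0 i1,
    integral_mul_const, integral_mul_const, integral_mul_const, integral_const_mul,
    integral_lam hP, integral_lam hP, integral_lam hP, integral_Rf hP]
  ring

end inv

/-- The integrand of `err`. -/
def gg (α : Set E2) (x : E2) : ℝ≥0∞ := ⨅ a ∈ α, ENNReal.ofReal (‖x - a‖ ^ 2)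

lemma meas_gg {α : Set E2} (hα : α.Finite) : Measurable (gg α) := by
  unfold gg
  apply Measurable.biInf _ hα.countable
  intro a _
  fun_prop

section cell

variable {P : Measure E2} [IsProbabilityMeasure P]

lemma ofReal_integral_le (f : E2 → ℝ) (hf : Integrable f P) :
    ENNReal.ofReal (∫ x, f x ∂P) ≤ ∫⁻ x, ENNReal.ofReal (f x) ∂P := by
  calc ENNReal.ofReal (∫ x, f x ∂P) ≤ ENNReal.ofReal (∫ x, max (f x) 0 ∂P) :=
        ENNReal.ofReal_le_ofReal (integral_mono hf hf.pos_part fun x => le_max_left _ _)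
    _ = ∫⁻ x, ENNReal.ofReal (max (f x) 0) ∂P :=
        ofReal_integral_eq_lintegral_ofReal hf.pos_part (Filter.Eventually.of_forall fun x => le_max_right _ _)
    _ = ∫⁻ x, ENNReal.ofReal (f x) ∂P := by
        congr 1
        ext x
        rw [ENNReal.ofReal_max]
        simp

lemma cell_lower (hP : P = (3 : ℝ≥0∞)⁻¹ • (P.map S1 + P.map S2 + P.map S3))
    {T : E2 → E2} {r : ℝ} (hT : IsHom T r) {α : Set E2} (m : Fin 3 → ℝ)
    (hm : ∀ k, ∀ a ∈ α, m k ≤ ‖T (vert k) - a‖ ^ 2) :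
    ENNReal.ofReal ((m 0 + m 1 + m 2) / 3 - r ^ 2 / 6) ≤ ∫⁻ x, gg α (T x) ∂P := by
  obtain ⟨hi, he⟩ := integral_comb hP m (r ^ 2)
  rw [← he]
  refine (ofReal_integral_le _ hi).trans (lintegral_mono_ae ?_)
  filter_upwards [ae_lam hP] with x hx
  refine le_iInf₂ fun a ha => ENNReal.ofReal_le_ofReal ?_
  rw [hom_identity hT x a]
  have h0 := mul_le_mul_of_nonneg_left (hm 0 a ha) (hx 0)
  have h1 := mul_le_mul_of_nonneg_left (hm 1 a ha) (hx 1)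
  have h2 := mul_le_mul_of_nonneg_left (hm 2 a ha) (hx 2)
  linarith

lemma cell_upper (hP : P = (3 : ℝ≥0∞)⁻¹ • (P.map S1 + P.map S2 + P.map S3))
    {T : E2 → E2} {r : ℝ} (hT : IsHom T r) {α : Set E2} {a : E2} (ha : a ∈ α) {q : ℝ}
    (hq : (‖T (vert 0) - a‖ ^ 2 + ‖T (vert 1) - a‖ ^ 2 + ‖T (vert 2) - a‖ ^ 2) / 3
      - r ^ 2 / 6 = q) :
    ∫⁻ x, gg α (T x) ∂P ≤ ENNReal.ofReal q := by
  obtain ⟨hi, he⟩ := integral_comb hP (fun k => ‖T (vert k) - a‖ ^ 2) (r ^ 2)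
  rw [← hq, ← he, ofReal_integral_eq_lintegral_ofReal hi
    (Filter.Eventually.of_forall fun x => by
      simp only [Pi.zero_apply]
      rw [← hom_identity hT x a]; positivity)]
  refine lintegral_mono fun x => ?_
  simp only []
  rw [← hom_identity hT x a]
  exact iInf₂_le a ha

end cell

/-! ### Assembling the bounds -/

lemma third_lower {x y z : ℝ} {A B C : ℝ≥0∞} (hx : ENNReal.ofReal x ≤ A)
    (hy : ENNReal.ofReal y ≤ B) (hz : ENNReal.ofReal z ≤ C) :
    ENNReal.ofReal ((x + y + z) / 3) ≤ 3⁻¹ * (A + B + C) := by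
  rw [ENNReal.ofReal_div_of_pos (by norm_num), div_eq_mul_inv, mul_comm]
  have h3 : ENNReal.ofReal 3 = 3 := by simp
  rw [h3]
  gcongr
  exact ENNReal.ofReal_add_le.trans (add_le_add (ENNReal.ofReal_add_le.trans (add_le_add hx hy)) hz)

lemma third_upper {x y z : ℝ} {A B C : ℝ≥0∞} (px : 0 ≤ x) (py : 0 ≤ y) (pz : 0 ≤ z)
    (hx : A ≤ ENNReal.ofReal x) (hy : B ≤ ENNReal.ofReal y) (hz : C ≤ ENNReal.ofReal z) :
    3⁻¹ * (A + B + C) ≤ ENNReal.ofReal ((x + y + z) / 3) := by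
  rw [ENNReal.ofReal_div_of_pos (by norm_num), div_eq_mul_inv, mul_comm]
  have h3 : ENNReal.ofReal 3 = 3 := by simp
  rw [h3, ENNReal.ofReal_add (by positivity) pz, ENNReal.ofReal_add px py]
  gcongr

lemma exists_enum {α : Set E2} (hα : α.Finite) (hne : α.Nonempty) {n : ℕ} (hn : α.ncard ≤ n) :
    ∃ a : Fin n → E2, Set.range a = α := by
  have : Fintype α := hα.fintype
  have : Nonempty α := hne.to_subtype
  have hcard : Fintype.card α ≤ Fintype.card (Fin n) := by
    rw [Fintype.card_fin, ← Nat.card_eq_fintype_card]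
    exact hn
  obtain ⟨e⟩ := Function.Embedding.nonempty_of_card_le hcard
  refine ⟨fun t => ((Function.invFun (e : α → Fin n) t : α) : E2), ?_⟩
  have hs := Function.invFun_surjective e.injective
  ext x
  constructor
  · rintro ⟨t, rfl⟩
    exact (Function.invFun e t).2
  · intro hx
    obtain ⟨t, ht⟩ := hs ⟨x, hx⟩
    exact ⟨t, by simp [ht]⟩

lemma exists_nearest {n : ℕ} [NeZero n] (a : Fin n → E2) (y : E2) :
    ∃ t, ∀ b ∈ Set.range a, ‖y - a t‖ ^ 2 ≤ ‖y - b‖ ^ 2 := by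
  obtain ⟨t, ht⟩ := Finite.exists_min fun t => ‖y - a t‖ ^ 2
  refine ⟨t, ?_⟩
  rintro _ ⟨s, rfl⟩
  exact ht s

lemma err_empty (P : Measure E2) [IsProbabilityMeasure P] : err P ∅ = ⊤ := by
  simp [err]

lemma lattice1 (j k : Fin 3) (a : E2) :
    dd 0 (j, k) (6 * a 0, 6 * zc a) = 36 * ‖Smap j (vert k) - a‖ ^ 2 := by
  rw [normsq, Smap_x, Smap_z, vert_x, vert_z]
  fin_cases j <;> fin_cases k <;> simp [dd, NN, wX, wZ, vX, vZ, oX, oZ] <;> ring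

lemma lattice2 (i j k : Fin 3) (a : E2) :
    dd i (j, k) (18 * a 0, 18 * zc a) = 324 * ‖Smap i (Smap j (vert k)) - a‖ ^ 2 := by
  rw [normsq, Smap_x, Smap_z, Smap_x, Smap_z, vert_x, vert_z]
  fin_cases i <;> fin_cases j <;> fin_cases k <;>
    simp [dd, NN, wX, wZ, vX, vZ, oX, oZ] <;> ring

section bounds

variable {P : Measure E2} [IsProbabilityMeasure P]

lemma lower1 (hP : P = (3 : ℝ≥0∞)⁻¹ • (P.map S1 + P.map S2 + P.map S3)) {α : Set E2}
    (hα : α.Finite) (hn : α.ncard ≤ 1) : ENNReal.ofReal (1 / 6) ≤ err P α := by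
  rcases α.eq_empty_or_nonempty with rfl | hne
  · rw [err_empty]; exact le_top
  obtain ⟨a, rfl⟩ := exists_enum hα hne hn
  have := cell_lower hP hom_id (α := Set.range a) (fun k => ‖vert k - a 0‖ ^ 2) (by
    rintro k _ ⟨t, rfl⟩
    rw [Subsingleton.elim t 0])
  refine le_trans (ENNReal.ofReal_le_ofReal ?_) this
  simp only [normsq, vert_x, vert_z]
  simp [NN]
  nlinarith [sq_nonneg (a 0 0 - 1/2), sq_nonneg (zc (a 0) - 1/6)]

lemma lower2 (hP : P = (3 : ℝ≥0∞)⁻¹ • (P.map S1 + P.map S2 + P.map S3)) {α : Set E2}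
    (hα : α.Finite) (hn : α.ncard ≤ 2) : ENNReal.ofReal (5 / 54) ≤ err P α := by
  rcases α.eq_empty_or_nonempty with rfl | hne
  · rw [err_empty]; exact le_top
  obtain ⟨a, rfl⟩ := exists_enum hα hne hn
  choose t ht using fun w : Idx => exists_nearest a (Smap w.1 (vert w.2))
  have hb := two_bound (6 * a 0 0, 6 * zc (a 0)) (6 * a 1 0, 6 * zc (a 1))
    (fun w => 36 * ‖Smap w.1 (vert w.2) - a (t w)‖ ^ 2) (fun w => by
      rcases Fin.exists_fin_two.1 ⟨t w, rfl⟩ with h | h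
      · left; rw [show w = (w.1, w.2) from rfl, lattice1, ← h]
      · right; rw [show w = (w.1, w.2) from rfl, lattice1, ← h])
  have hc : ∀ j, _ := fun j => cell_lower hP (hom1 j) (α := Set.range a)
    (fun k => ‖Smap j (vert k) - a (t (j, k))‖ ^ 2) (fun k b hb => ht (j, k) b hb)
  have hE := third_lower (hc 0) (hc 1) (hc 2)
  rw [← inv_lintegral hP (meas_gg hα)] at hE
  refine le_trans (ENNReal.ofReal_le_ofReal ?_) hE
  simp only [idxList, List.map_cons, List.map_nil, List.sum_cons, List.sum_nil] at hb
  linarith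

lemma lower4 (hP : P = (3 : ℝ≥0∞)⁻¹ • (P.map S1 + P.map S2 + P.map S3)) {α : Set E2}
    (hα : α.Finite) (hn : α.ncard ≤ 4) : ENNReal.ofReal (23 / 1458) ≤ err P α := by
  rcases α.eq_empty_or_nonempty with rfl | hne
  · rw [err_empty]; exact le_top
  obtain ⟨a, rfl⟩ := exists_enum hα hne hn
  choose t ht using fun (i : Fin 3) (w : Idx) => exists_nearest a (Smap i (Smap w.1 (vert w.2)))
  have hb := four_bound (fun s => (18 * a s 0, 18 * zc (a s)))
    (fun i w => 324 * ‖Smap i (Smap w.1 (vert w.2)) - a (t i w)‖ ^ 2) (fun i w => by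
      refine ⟨t i w, ?_⟩
      rw [← lattice2])
  have hc : ∀ i j, _ := fun i j => cell_lower hP (hom2 i j) (α := Set.range a)
    (fun k => ‖Smap i (Smap j (vert k)) - a (t i (j, k))‖ ^ 2)
    (fun k b hb => ht i (j, k) b hb)
  have hd : ∀ i, _ := fun i => third_lower (hc i 0) (hc i 1) (hc i 2)
  have hinv : ∀ i, ∫⁻ x, gg (Set.range a) (Smap i x) ∂P = _ := fun i =>
    inv_lintegral hP ((meas_gg hα).comp (meas_Smap i))
  simp only [← hinv] at hd
  have hE := third_lower (hd 0) (hd 1) (hd 2)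
  rw [← inv_lintegral hP (meas_gg hα)] at hE
  refine le_trans (ENNReal.ofReal_le_ofReal ?_) hE
  simp only [idxList, List.map_cons, List.map_nil, List.sum_cons, List.sum_nil] at hb
  linarith

lemma upper1 (hP : P = (3 : ℝ≥0∞)⁻¹ • (P.map S1 + P.map S2 + P.map S3)) :
    err P {pt (1/2) (Real.sqrt 3 / 6)} ≤ ENNReal.ofReal (1 / 6) := by
  have h3 := sqrt3_pos.ne'
  refine cell_upper hP hom_id (Set.mem_singleton _) ?_
  have e : Real.sqrt 3 / 6 / Real.sqrt 3 = 1 / 6 := by field_simp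
  simp only [normsq, vert_x, vert_z, zc_pt, pt_zero, e]
  simp [NN]
  norm_num

lemma upper2 (hP : P = (3 : ℝ≥0∞)⁻¹ • (P.map S1 + P.map S2 + P.map S3)) :
    err P {pt (1/2) (Real.sqrt 3 / 18), pt (1/2) (7 * Real.sqrt 3 / 18)}
      ≤ ENNReal.ofReal (5 / 54) := by
  have h3 := sqrt3_pos.ne'
  set α : Set E2 := {pt (1/2) (Real.sqrt 3 / 18), pt (1/2) (7 * Real.sqrt 3 / 18)} with hα
  have hfin : α.Finite := by simp [hα]
  have e1 : Real.sqrt 3 / 18 / Real.sqrt 3 = 1 / 18 := by field_simp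
  have e2 : 7 * Real.sqrt 3 / 18 / Real.sqrt 3 = 7 / 18 := by field_simp
  have m1 : pt (1/2) (Real.sqrt 3 / 18) ∈ α := by simp [hα]
  have m2 : pt (1/2) (7 * Real.sqrt 3 / 18) ∈ α := by simp [hα]
  have c0 := cell_upper hP (hom1 0) m1 (q := 7/54) (by
    simp only [normsq, Smap_x, Smap_z, vert_x, vert_z, zc_pt, pt_zero, e1]
    simp [NN]; norm_num)
  have c1 := cell_upper hP (hom1 1) m1 (q := 7/54) (by
    simp only [normsq, Smap_x, Smap_z, vert_x, vert_z, zc_pt, pt_zero, e1]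
    simp [NN]; norm_num)
  have c2 := cell_upper hP (hom1 2) m2 (q := 1/54) (by
    simp only [normsq, Smap_x, Smap_z, vert_x, vert_z, zc_pt, pt_zero, e2]
    simp [NN]; norm_num)
  have h := third_upper (by norm_num) (by norm_num) (by norm_num) c0 c1 c2
  rw [← inv_lintegral hP (meas_gg hfin)] at h
  refine h.trans (ENNReal.ofReal_le_ofReal (by norm_num))

lemma upper4 (hP : P = (3 : ℝ≥0∞)⁻¹ • (P.map S1 + P.map S2 + P.map S3)) :
    err P {pt (1/6) (Real.sqrt 3 / 18), pt (5/6) (Real.sqrt 3 / 18),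
          pt (1/2) (25 * Real.sqrt 3 / 54), pt (1/2) (19 * Real.sqrt 3 / 54)}
      ≤ ENNReal.ofReal (23 / 1458) := by
  have h3 := sqrt3_pos.ne'
  set α : Set E2 := {pt (1/6) (Real.sqrt 3 / 18), pt (5/6) (Real.sqrt 3 / 18),
          pt (1/2) (25 * Real.sqrt 3 / 54), pt (1/2) (19 * Real.sqrt 3 / 54)} with hα
  have hfin : α.Finite := by simp [hα]
  have e1 : Real.sqrt 3 / 18 / Real.sqrt 3 = 1 / 18 := by field_simp
  have e2 : 25 * Real.sqrt 3 / 54 / Real.sqrt 3 = 25 / 54 := by field_simp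
  have e3 : 19 * Real.sqrt 3 / 54 / Real.sqrt 3 = 19 / 54 := by field_simp
  have m1 : pt (1/6) (Real.sqrt 3 / 18) ∈ α := by simp [hα]
  have m2 : pt (5/6) (Real.sqrt 3 / 18) ∈ α := by simp [hα]
  have m3 : pt (1/2) (25 * Real.sqrt 3 / 54) ∈ α := by simp [hα]
  have m4 : pt (1/2) (19 * Real.sqrt 3 / 54) ∈ α := by simp [hα]
  have c0 := cell_upper hP (hom1 0) m1 (q := 1/54) (by
    simp only [normsq, Smap_x, Smap_z, vert_x, vert_z, zc_pt, pt_zero, e1]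
    simp [NN]; norm_num)
  have c1 := cell_upper hP (hom1 1) m2 (q := 1/54) (by
    simp only [normsq, Smap_x, Smap_z, vert_x, vert_z, zc_pt, pt_zero, e1]
    simp [NN]; norm_num)
  have d0 := cell_upper hP (hom2 2 0) m4 (q := 7/486) (by
    simp only [normsq, Smap_x, Smap_z, vert_x, vert_z, zc_pt, pt_zero, e3]
    simp [NN]; norm_num)
  have d1 := cell_upper hP (hom2 2 1) m4 (q := 7/486) (by
    simp only [normsq, Smap_x, Smap_z, vert_x, vert_z, zc_pt, pt_zero, e3]
    simp [NN]; norm_num)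
  have d2 := cell_upper hP (hom2 2 2) m3 (q := 1/486) (by
    simp only [normsq, Smap_x, Smap_z, vert_x, vert_z, zc_pt, pt_zero, e2]
    simp [NN]; norm_num)
  have c2 := third_upper (by norm_num) (by norm_num) (by norm_num) d0 d1 d2
  have hinv := inv_lintegral hP ((meas_gg hfin).comp (meas_Smap 2))
  simp only [Function.comp_apply] at hinv
  rw [← hinv] at c2
  have h := third_upper (by norm_num) (by norm_num) (by norm_num) c0 c1 c2
  rw [← inv_lintegral hP (meas_gg hfin)] at h
  refine h.trans (ENNReal.ofReal_le_ofReal (by norm_num))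

lemma quant_eq {n : ℕ} {v : ℝ≥0∞} {α : Set E2} (hf : α.Finite) (hc : α.ncard ≤ n)
    (hu : err P α ≤ v) (hl : ∀ β : Set E2, β.Finite → β.ncard ≤ n → v ≤ err P β) :
    quantErr P n = v := by
  apply le_antisymm
  · exact (iInf₂_le α ⟨hf, hc⟩).trans hu
  · exact le_iInf₂ fun β hβ => hl β hβ.1 hβ.2

end bounds

lemma ncard_two (a b : E2) : ({a, b} : Set E2).ncard ≤ 2 := by
  refine (Set.ncard_insert_le _ _).trans ?_
  simp

lemma ncard_four (a b c d : E2) : ({a, b, c, d} : Set E2).ncard ≤ 4 := by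
  refine (Set.ncard_insert_le _ _).trans ?_
  have h1 := Set.ncard_insert_le b ({c, d} : Set E2)
  have h2 := ncard_two c d
  omega

lemma points_eq :
    ({S1 (pt (1/2) (Real.sqrt 3 / 6)), S2 (pt (1/2) (Real.sqrt 3 / 6)),
        S3 (S3 (pt (1/2) (Real.sqrt 3 / 6))),
        (2 : ℝ)⁻¹ • (S3 (S1 (pt (1/2) (Real.sqrt 3 / 6)))
          + S3 (S2 (pt (1/2) (Real.sqrt 3 / 6))))} : Set E2)
        = {pt (1/6) (Real.sqrt 3 / 18), pt (5/6) (Real.sqrt 3 / 18),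
            pt (1/2) (25 * Real.sqrt 3 / 54), pt (1/2) (19 * Real.sqrt 3 / 54)} := by
  have a1 : S1 (pt (1/2) (Real.sqrt 3 / 6)) = pt (1/6) (Real.sqrt 3 / 18) := by
    ext i; fin_cases i <;> simp [S1] <;> ring
  have a2 : S2 (pt (1/2) (Real.sqrt 3 / 6)) = pt (5/6) (Real.sqrt 3 / 18) := by
    ext i; fin_cases i <;> simp [S2] <;> ring
  have a3 : S3 (S3 (pt (1/2) (Real.sqrt 3 / 6))) = pt (1/2) (25 * Real.sqrt 3 / 54) := by
    ext i; fin_cases i <;> simp [S3] <;> ring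
  have a4 : (2 : ℝ)⁻¹ • (S3 (S1 (pt (1/2) (Real.sqrt 3 / 6)))
          + S3 (S2 (pt (1/2) (Real.sqrt 3 / 6)))) = pt (1/2) (19 * Real.sqrt 3 / 54) := by
    ext i; fin_cases i <;> simp [S1, S2, S3] <;> ring
  rw [a4, a1, a2, a3]

/-- The set {S₁(c), S₂(c), S₃(S₃(c)), (S₃(S₁(c))+S₃(S₂(c)))/2}
= {(1/6, √3/18), (5/6, √3/18), (1/2, 25√3/54), (1/2, 19√3/54)}, where c = (1/2, √3/6),
is an optimal set of four-means for the R-measure P, with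
V₄(P) = (1/27)(2V₁(P) + V₂(P)) = 23/1458. -/
theorem stmt_11 (P : Measure E2) [IsProbabilityMeasure P]
    (hP : P = (3 : ℝ≥0∞)⁻¹ • (P.map S1 + P.map S2 + P.map S3)) :
    ({S1 (pt (1/2) (Real.sqrt 3 / 6)), S2 (pt (1/2) (Real.sqrt 3 / 6)),
        S3 (S3 (pt (1/2) (Real.sqrt 3 / 6))),
        (2 : ℝ)⁻¹ • (S3 (S1 (pt (1/2) (Real.sqrt 3 / 6)))
          + S3 (S2 (pt (1/2) (Real.sqrt 3 / 6))))} : Set E2)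
        = {pt (1/6) (Real.sqrt 3 / 18), pt (5/6) (Real.sqrt 3 / 18),
            pt (1/2) (25 * Real.sqrt 3 / 54), pt (1/2) (19 * Real.sqrt 3 / 54)}
      ∧ IsOptimal P 4 {pt (1/6) (Real.sqrt 3 / 18), pt (5/6) (Real.sqrt 3 / 18),
          pt (1/2) (25 * Real.sqrt 3 / 54), pt (1/2) (19 * Real.sqrt 3 / 54)}
      ∧ quantErr P 4 = (27 : ℝ≥0∞)⁻¹ * (2 * quantErr P 1 + quantErr P 2)
      ∧ quantErr P 4 = 23 / 1458 := by
  have q1 : quantErr P 1 = ENNReal.ofReal (1 / 6) :=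
    quant_eq (Set.finite_singleton _) (by simp) (upper1 hP) fun β h1 h2 => lower1 hP h1 h2
  have q2 : quantErr P 2 = ENNReal.ofReal (5 / 54) :=
    quant_eq (by simp) (ncard_two _ _) (upper2 hP) fun β h1 h2 => lower2 hP h1 h2
  have q4 : quantErr P 4 = ENNReal.ofReal (23 / 1458) :=
    quant_eq (by simp) (ncard_four _ _ _ _) (upper4 hP) fun β h1 h2 => lower4 hP h1 h2
  refine ⟨points_eq, ⟨by simp, ncard_four _ _ _ _, ?_⟩, ?_, ?_⟩
  · rw [q4]
    exact le_antisymm (upper4 hP) (lower4 hP (by simp) (ncard_four _ _ _ _))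
  · rw [q1, q2, q4]
    have e2 : (2 : ℝ≥0∞) = ENNReal.ofReal 2 := by simp
    have e27 : (27 : ℝ≥0∞)⁻¹ = ENNReal.ofReal (27⁻¹) := by
      rw [ENNReal.ofReal_inv_of_pos (by norm_num)]; simp
    rw [e2, e27, ← ENNReal.ofReal_mul (by norm_num), ← ENNReal.ofReal_add (by norm_num) (by norm_num),
      ← ENNReal.ofReal_mul (by norm_num)]
    norm_num
  · rw [q4, ENNReal.ofReal_div_of_pos (by norm_num)]
    simp

end
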